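/- The infinite series identity 15√2/16 = Σ_{k=0}^{∞} (1/4)^k · [(3/4)_k (3/2)_k (3/2)_k] / [(1)_k (13/8)_k (17/8)_k] · (k + 1) holds, where the sum is over natural numbers k and all quantities are real numbers. -/

import Mathlib

noncomputable def risingFactorial (a : ℝ) (k : ℕ) : ℝ := ∏ i ∈ Finset.range k, (a + i)

/-!
The numbers `F n k = (a)ₙ (b)ₙ (c-a)ₖ (c-b)ₖ / (n! (c)ₙ₊ₖ (c-a-b)ₖ)` form one half of a
Wilf–Zeilberger pair: `F n (k+1) - F n k = G (n+1) k - G n k` with `G n k = n F n k / (c-a-b+k)`.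
Summing this over `n < K` and then over `K` turns the sum of `F n K` over `n < K` into a sum over
`k < K` of the diagonal terms `F k (k+1) + G k k`. As `K → ∞` only `n = 0` survives on the first
side, and `F 0 K` tends to Gauss's value `Γ(c) Γ(c-a-b) / (Γ(c-a) Γ(c-b))` of `₂F₁(a, b; c; 1)`.
For `a = b = 3/4` and `c = 9/4` the diagonal terms factor into the given summand, and Euler's
reflection formula evaluates the Gamma quotient.
-/

open Filter Topology

section RisingFactorial

lemma risingFactorial_zero (a : ℝ) : risingFactorial a 0 = 1 := Finset.prod_range_zero _

lemma risingFactorial_succ (a : ℝ) (k : ℕ) :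
    risingFactorial a (k + 1) = risingFactorial a k * (a + k) :=
  Finset.prod_range_succ _ _

lemma risingFactorial_succ_left (a : ℝ) (k : ℕ) :
    risingFactorial a (k + 1) = a * risingFactorial (a + 1) k := by
  simp only [risingFactorial, Finset.prod_range_succ', Nat.cast_zero, add_zero, mul_comm a]
  congr! 2 with i
  push_cast
  ring

lemma risingFactorial_nonneg {a : ℝ} (ha : 0 ≤ a) (k : ℕ) : 0 ≤ risingFactorial a k :=
  Finset.prod_nonneg fun _ _ ↦ by positivity

lemma risingFactorial_pos {a : ℝ} (ha : 0 < a) (k : ℕ) : 0 < risingFactorial a k :=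
  Finset.prod_pos fun _ _ ↦ by positivity

lemma risingFactorial_two_mul (a : ℝ) (k : ℕ) :
    risingFactorial a (2 * k) =
      4 ^ k * (risingFactorial (a / 2) k * risingFactorial ((a + 1) / 2) k) := by
  induction k with
  | zero => simp [risingFactorial_zero]
  | succ k ih =>
    rw [mul_add_one, risingFactorial_succ, risingFactorial_succ, ih, risingFactorial_succ,
      risingFactorial_succ]
    push_cast
    ring

lemma risingFactorial_succ_eq_div_GammaSeq {s : ℝ} (hs : 0 < s) {n : ℕ} (hn : n ≠ 0) :
    risingFactorial s (n + 1) = (n : ℝ) ^ s * n.factorial / Real.GammaSeq s n := by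
  have hrf := risingFactorial_pos hs (n + 1)
  have : (0 : ℝ) < (n : ℝ) ^ s := by positivity
  have hseq : Real.GammaSeq s n = (n : ℝ) ^ s * n.factorial / risingFactorial s (n + 1) := rfl
  rw [hseq]
  field_simp

/-- The powers of `n` in Euler's limit formula for `Γ` cancel because `p + q = r + s`. -/
lemma tendsto_risingFactorial_mul_div_mul {p q r s : ℝ} (hp : 0 < p) (hq : 0 < q) (hr : 0 < r)
    (hs : 0 < s) (hsum : p + q = r + s) :
    Tendsto (fun n ↦ risingFactorial p n * risingFactorial q n /
        (risingFactorial r n * risingFactorial s n)) atTop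
      (𝓝 (Real.Gamma r * Real.Gamma s / (Real.Gamma p * Real.Gamma q))) := by
  rw [← tendsto_add_atTop_iff_nat 1]
  have hGamma := ((Real.GammaSeq_tendsto_Gamma r).mul (Real.GammaSeq_tendsto_Gamma s)).div
    ((Real.GammaSeq_tendsto_Gamma p).mul (Real.GammaSeq_tendsto_Gamma q))
    (mul_pos (Real.Gamma_pos_of_pos hp) (Real.Gamma_pos_of_pos hq)).ne'
  refine hGamma.congr' ?_
  filter_upwards [eventually_ne_atTop 0] with n hn
  have hpow : (n : ℝ) ^ p * (n : ℝ) ^ q = (n : ℝ) ^ r * (n : ℝ) ^ s := by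
    rw [← Real.rpow_add (by positivity), ← Real.rpow_add (by positivity), hsum]
  have : (0 : ℝ) < (n : ℝ) ^ r := by positivity
  have : (0 : ℝ) < (n : ℝ) ^ s := by positivity
  rw [risingFactorial_succ_eq_div_GammaSeq hp hn, risingFactorial_succ_eq_div_GammaSeq hq hn,
    risingFactorial_succ_eq_div_GammaSeq hr hn, risingFactorial_succ_eq_div_GammaSeq hs hn,
    div_mul_div_comm, div_mul_div_comm, mul_mul_mul_comm, hpow, mul_mul_mul_comm ((n : ℝ) ^ r)]
  simp only [Pi.div_apply]
  field_simp

end RisingFactorial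

/-- The first member of the Wilf–Zeilberger pair certifying Gauss's summation theorem: up to a
factor depending only on `k`, this is the `n`-th term of `₂F₁(a, b; c + k; 1)`, and that factor is
chosen so that the sum over `n` is the same for all `k`. The `n!` of the hypergeometric series is
written `(1)ₙ`. -/
noncomputable def gaussWZ (a b c : ℝ) (n k : ℕ) : ℝ :=
  risingFactorial a n * risingFactorial b n *
      (risingFactorial (c - a) k * risingFactorial (c - b) k) /
    (risingFactorial 1 n * risingFactorial c (n + k) * risingFactorial (c - a - b) k)

section GaussWZ

variable {a b c : ℝ}

lemma gaussWZ_zero_left (k : ℕ) :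
    gaussWZ a b c 0 k = risingFactorial (c - a) k * risingFactorial (c - b) k /
      (risingFactorial c k * risingFactorial (c - a - b) k) := by
  simp [gaussWZ, risingFactorial_zero]

lemma succ_mul_gaussWZ_succ_left (n k : ℕ) :
    (n + 1 : ℕ) * gaussWZ a b c (n + 1) k =
      gaussWZ a b c n k * ((a + n) * (b + n) / (c + n + k)) := by
  simp only [gaussWZ, add_right_comm n 1 k, risingFactorial_succ, Nat.cast_add, Nat.cast_one,
    ← add_assoc c, add_comm (1 : ℝ)]
  field_simp

lemma gaussWZ_succ_right (n k : ℕ) :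
    gaussWZ a b c n (k + 1) =
      gaussWZ a b c n k * ((c - a + k) * (c - b + k) / ((c + n + k) * (c - a - b + k))) := by
  simp only [gaussWZ, ← add_assoc n k 1, risingFactorial_succ, Nat.cast_add, ← add_assoc c]
  field_simp

lemma gaussWZ_succ_right_sub (n k : ℕ) (hc : c + n + k ≠ 0) (hd : c - a - b + k ≠ 0) :
    gaussWZ a b c n (k + 1) - gaussWZ a b c n k =
      (n + 1 : ℕ) * gaussWZ a b c (n + 1) k / (c - a - b + k) -
        n * gaussWZ a b c n k / (c - a - b + k) := by
  rw [succ_mul_gaussWZ_succ_left, gaussWZ_succ_right]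
  field_simp
  ring

lemma sum_gaussWZ_succ_right_sub (N k : ℕ) (hc : ∀ m : ℕ, c + m ≠ 0)
    (hd : c - a - b + k ≠ 0) :
    ∑ n ∈ Finset.range N, (gaussWZ a b c n (k + 1) - gaussWZ a b c n k) =
      N * gaussWZ a b c N k / (c - a - b + k) := by
  have hcn (n : ℕ) : c + n + k ≠ 0 := by simpa [add_assoc] using hc (n + k)
  rw [Finset.sum_congr rfl fun n _ ↦ gaussWZ_succ_right_sub n k (hcn n) hd,
    Finset.sum_range_sub fun n : ℕ ↦ n * gaussWZ a b c n k / (c - a - b + k)]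
  simp

lemma sum_diagonal_gaussWZ (K : ℕ) (hc : ∀ m : ℕ, c + m ≠ 0)
    (hd : ∀ m : ℕ, c - a - b + m ≠ 0) :
    ∑ k ∈ Finset.range K,
        (gaussWZ a b c k (k + 1) + k * gaussWZ a b c k k / (c - a - b + k)) =
      ∑ n ∈ Finset.range K, gaussWZ a b c n K := by
  induction K with
  | zero => simp
  | succ K ih =>
    have hstep := sum_gaussWZ_succ_right_sub (a := a) (b := b) K K hc (hd K)
    rw [Finset.sum_sub_distrib] at hstep
    rw [Finset.sum_range_succ, Finset.sum_range_succ, ih]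
    linarith

lemma diagonal_gaussWZ_eq (k : ℕ) (hc : c + 2 * k ≠ 0) :
    gaussWZ a b c k (k + 1) + k * gaussWZ a b c k k / (c - a - b + k) =
      risingFactorial a k * risingFactorial b k *
          (risingFactorial (c - a) k * risingFactorial (c - b) k) *
          ((c - a + k) * (c - b + k) + k * (c + 2 * k)) /
        (risingFactorial 1 k * risingFactorial c (2 * k + 1) *
          risingFactorial (c - a - b) (k + 1)) := by
  rw [mul_comm] at hc
  rw [gaussWZ_succ_right, add_assoc c, ← two_mul (k : ℝ)]
  simp only [gaussWZ, ← two_mul k, risingFactorial_succ, Nat.cast_mul, Nat.cast_ofNat]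
  field_simp

lemma gaussWZ_nonneg (ha : 0 ≤ a) (hb : 0 ≤ b) (hc : a + b ≤ c) (n k : ℕ) :
    0 ≤ gaussWZ a b c n k := by
  have := risingFactorial_nonneg ha n
  have := risingFactorial_nonneg hb n
  have := risingFactorial_nonneg (show 0 ≤ c - a by linarith) k
  have := risingFactorial_nonneg (show 0 ≤ c - b by linarith) k
  have := risingFactorial_nonneg zero_le_one n
  have := risingFactorial_nonneg (show 0 ≤ c by linarith) (n + k)
  have := risingFactorial_nonneg (show 0 ≤ c - a - b by linarith) k
  unfold gaussWZ
  positivity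

lemma tendsto_gaussWZ_zero_left (ha : 0 ≤ a) (hb : 0 ≤ b) (hc : a + b < c) :
    Tendsto (gaussWZ a b c 0) atTop
      (𝓝 (Real.Gamma c * Real.Gamma (c - a - b) / (Real.Gamma (c - a) * Real.Gamma (c - b)))) := by
  rw [funext gaussWZ_zero_left]
  exact tendsto_risingFactorial_mul_div_mul (by linarith) (by linarith) (by linarith)
    (by linarith) (by ring)

/-- With `m = n + 1`, the difference in parentheses is `(m (c-a-b+k) - a b) / (c+m+k)` times the
left-hand side, and this factor is at least `1 / 2` for large `k`. -/
lemma gaussWZ_succ_le_two_mul_sub (ha : 0 ≤ a) (hb : 0 ≤ b) (hc : a + b < c) (n k : ℕ)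
    (hk : c + 1 + 2 * (a * b) ≤ k) :
    gaussWZ a b c (n + 1) k ≤
      2 * ((n + 1 : ℕ) * gaussWZ a b c (n + 1) k - (n + 2 : ℕ) * gaussWZ a b c (n + 2) k) := by
  have hc_pos : 0 < c := by linarith
  have hratio : (a + (n + 1 : ℕ)) * (b + (n + 1 : ℕ)) / (c + (n + 1 : ℕ) + k) ≤
      (n + 1 : ℕ) - 1 / 2 := by
    rw [div_le_iff₀ (by positivity)]
    push_cast
    have hab : 0 ≤ a * b := by positivity
    nlinarith [mul_nonneg n.cast_nonneg (show (0 : ℝ) ≤ k - 1 / 2 by linarith),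
      mul_nonneg n.cast_nonneg (sub_nonneg.2 hc.le)]
  rw [succ_mul_gaussWZ_succ_left (n + 1)]
  linarith [mul_le_mul_of_nonneg_left hratio (gaussWZ_nonneg ha hb hc.le (n + 1) k)]

lemma sum_gaussWZ_le (ha : 0 ≤ a) (hb : 0 ≤ b) (hc : a + b < c) (N k : ℕ)
    (hk : c + 1 + 2 * (a * b) ≤ k) :
    ∑ n ∈ Finset.range N, gaussWZ a b c n k ≤
      gaussWZ a b c 0 k * (1 + 2 * (a * b / (c + k))) := by
  have hF (n : ℕ) := gaussWZ_nonneg ha hb hc.le n k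
  have hone : gaussWZ a b c 1 k = gaussWZ a b c 0 k * (a * b / (c + k)) := by
    simpa using succ_mul_gaussWZ_succ_left (a := a) (b := b) (c := c) 0 k
  have htail : ∑ n ∈ Finset.range N, gaussWZ a b c (n + 1) k ≤ 2 * gaussWZ a b c 1 k := calc
    _ ≤ ∑ n ∈ Finset.range N, 2 * ((n + 1 : ℕ) * gaussWZ a b c (n + 1) k -
          (n + 2 : ℕ) * gaussWZ a b c (n + 2) k) :=
      Finset.sum_le_sum fun n _ ↦ gaussWZ_succ_le_two_mul_sub ha hb hc n k hk
    _ = 2 * (gaussWZ a b c 1 k - (N + 1 : ℕ) * gaussWZ a b c (N + 1) k) := by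
      rw [← Finset.mul_sum,
        Finset.sum_range_sub' fun n : ℕ ↦ (n + 1 : ℕ) * gaussWZ a b c (n + 1) k]
      simp
    _ ≤ 2 * gaussWZ a b c 1 k := by
      linarith [mul_nonneg (N + 1).cast_nonneg (hF (N + 1))]
  calc _ ≤ ∑ n ∈ Finset.range (N + 1), gaussWZ a b c n k :=
        Finset.sum_le_sum_of_subset_of_nonneg (Finset.range_mono N.le_succ) fun n _ _ ↦ hF n
    _ ≤ gaussWZ a b c 0 k * (1 + 2 * (a * b / (c + k))) := by
        rw [Finset.sum_range_succ']
        linarith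

lemma tendsto_sum_gaussWZ (ha : 0 ≤ a) (hb : 0 ≤ b) (hc : a + b < c) :
    Tendsto (fun K ↦ ∑ n ∈ Finset.range K, gaussWZ a b c n K) atTop
      (𝓝 (Real.Gamma c * Real.Gamma (c - a - b) / (Real.Gamma (c - a) * Real.Gamma (c - b)))) := by
  have hlower := tendsto_gaussWZ_zero_left ha hb hc
  have hvanish : Tendsto (fun K : ℕ ↦ a * b / (c + K)) atTop (𝓝 0) :=
    (tendsto_atTop_add_const_left _ c tendsto_natCast_atTop_atTop).const_div_atTop _
  have hupper := hlower.mul ((hvanish.const_mul 2).const_add 1)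
  rw [mul_zero, add_zero, mul_one] at hupper
  refine tendsto_of_tendsto_of_tendsto_of_le_of_le' hlower hupper ?_ ?_
  · filter_upwards [eventually_gt_atTop 0] with K hK
    exact Finset.single_le_sum (f := fun n ↦ gaussWZ a b c n K)
      (fun n _ ↦ gaussWZ_nonneg ha hb hc.le n K) (Finset.mem_range.2 hK)
  · filter_upwards [tendsto_natCast_atTop_atTop.eventually_ge_atTop (c + 1 + 2 * (a * b))]
      with K hK
    exact sum_gaussWZ_le ha hb hc K K hK

theorem hasSum_diagonal_gaussWZ (ha : 0 ≤ a) (hb : 0 ≤ b) (hc : a + b < c) :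
    HasSum (fun k : ℕ ↦ gaussWZ a b c k (k + 1) + k * gaussWZ a b c k k / (c - a - b + k))
      (Real.Gamma c * Real.Gamma (c - a - b) / (Real.Gamma (c - a) * Real.Gamma (c - b))) := by
  have hc_pos : 0 < c := by linarith
  have hd_pos : 0 < c - a - b := by linarith
  have hF := gaussWZ_nonneg ha hb hc.le
  rw [hasSum_iff_tendsto_nat_of_nonneg fun k ↦ by have := hF k k; have := hF k (k + 1); positivity]
  refine (tendsto_sum_gaussWZ ha hb hc).congr fun K ↦ (sum_diagonal_gaussWZ K ?_ ?_).symm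
  all_goals intro m; positivity

end GaussWZ

lemma Gamma_one_quarter_mul_Gamma_three_quarters :
    Real.Gamma (1 / 4) * Real.Gamma (3 / 4) = Real.pi * √2 := by
  have hreflection := Real.Gamma_mul_Gamma_one_sub (1 / 4)
  rw [show (1 - 1 / 4 : ℝ) = 3 / 4 by norm_num, mul_one_div, Real.sin_pi_div_four] at hreflection
  have hsqrt : √2 * √2 = (2 : ℝ) := Real.mul_self_sqrt zero_le_two
  rw [hreflection]
  field_simp
  linarith

lemma Gamma_nine_quarters_mul_Gamma_three_quarters_div :
    Real.Gamma (9 / 4) * Real.Gamma (3 / 4) / (Real.Gamma (3 / 2) * Real.Gamma (3 / 2)) =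
      5 / 4 * √2 := by
  have hnine : Real.Gamma (9 / 4) = 5 / 4 * (1 / 4 * Real.Gamma (1 / 4)) := by
    rw [← Real.Gamma_add_one (by norm_num), show (1 / 4 + 1 : ℝ) = 5 / 4 by norm_num,
      ← Real.Gamma_add_one (by norm_num)]
    norm_num
  have hthree : Real.Gamma (3 / 2) = 1 / 2 * √Real.pi := by
    rw [← Real.Gamma_one_half_eq, ← Real.Gamma_add_one (by norm_num)]
    norm_num
  have hpi : √Real.pi * √Real.pi = Real.pi := Real.mul_self_sqrt Real.pi_pos.le
  have hpi_ne := Real.pi_ne_zero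
  calc _ = 5 / 4 * (Real.Gamma (1 / 4) * Real.Gamma (3 / 4)) / (√Real.pi * √Real.pi) := by
        rw [hnine, hthree]; ring
    _ = 5 / 4 * √2 := by
        rw [Gamma_one_quarter_mul_Gamma_three_quarters, hpi]; field_simp

lemma risingFactorial_nine_quarters_two_mul_add_one (k : ℕ) :
    risingFactorial (9 / 4) (2 * k + 1) =
      9 / 4 * (4 ^ k * (risingFactorial (13 / 8) k * risingFactorial (17 / 8) k)) := by
  rw [risingFactorial_succ_left, risingFactorial_two_mul]
  norm_num

lemma summand_eq_diagonal_gaussWZ (k : ℕ) :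
    (1 / 4 : ℝ) ^ k *
        (risingFactorial (3 / 4) k * risingFactorial (3 / 2) k * risingFactorial (3 / 2) k) /
        (risingFactorial 1 k * risingFactorial (13 / 8) k * risingFactorial (17 / 8) k) *
        ((k : ℝ) + 1) =
      3 / 4 * (gaussWZ (3 / 4) (3 / 4) (9 / 4) k (k + 1) +
        k * gaussWZ (3 / 4) (3 / 4) (9 / 4) k k / (9 / 4 - 3 / 4 - 3 / 4 + k)) := by
  have := (risingFactorial_pos (show (0 : ℝ) < 3 / 4 by norm_num) k).ne'
  rw [diagonal_gaussWZ_eq k (by positivity), risingFactorial_nine_quarters_two_mul_add_one,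
    show (9 / 4 - 3 / 4 - 3 / 4 : ℝ) = 3 / 4 by norm_num,
    show (9 / 4 - 3 / 4 : ℝ) = 3 / 2 by norm_num, risingFactorial_succ, one_div_pow]
  have hfactor : (3 / 2 + k) * (3 / 2 + k) + k * (9 / 4 + 2 * k) =
      3 * (k + 1) * (3 / 4 + k : ℝ) := by ring
  rw [hfactor]
  field_simp
  ring

theorem stmt_1 :
    15 * Real.sqrt 2 / 16 =
      ∑' k : ℕ, (1/4 : ℝ) ^ k * (risingFactorial (3/4) k * risingFactorial (3/2) k * risingFactorial (3/2) k) /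
        (risingFactorial (1) k * risingFactorial (13/8) k * risingFactorial (17/8) k) * ((k:ℝ) + 1) := by
  have hsum := hasSum_diagonal_gaussWZ (a := 3 / 4) (b := 3 / 4) (c := 9 / 4)
    (by norm_num) (by norm_num) (by norm_num)
  simp_rw [summand_eq_diagonal_gaussWZ, tsum_mul_left]
  rw [hsum.tsum_eq, show (9 / 4 - 3 / 4 - 3 / 4 : ℝ) = 3 / 4 by norm_num,
    show (9 / 4 - 3 / 4 : ℝ) = 3 / 2 by norm_num,
    Gamma_nine_quarters_mul_Gamma_three_quarters_div]
  ring
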